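/- Let μ be a probability measure on ℝ^d supported on [−B,B]^d that admits a density, let σ>0, and let 0 < η ≤ B. Set k = ⌈B/η⌉^d. Then there exist means μ₁,…,μ_k ∈ [−B,B]^d and weights w₁,…,w_k ≥ 0 with Σᵢwᵢ = 1 such that d_TV( μ ∗ γ_{σ,d}, Σ_{i=1}^k wᵢ·N(μᵢ, σ²I_d) ) ≤ 2·√d·η/σ. That is, the Gaussian smoothing of any bounded-support distribution can be approximated in total variation distance by a mixture of k Gaussians with means in [−B,B]^d and common covariance σ²I_d. -/

import Mathlib

/-!
Gaussian smoothing averages Gaussians: `μ ∗ N(0, σ²I) = ∫ N(x, σ²I) dμ(x)` (`conv_gauss_apply`).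
Cut `[-B, B]^d` into `n^d` cubes with `n = ⌈B/η⌉`, so that every point `x` of the cube is within
`B/n ≤ η` of the center `c(x)` of its cell in each coordinate (`abs_sub_cellMid_le`), hence within
`√d·η` in Euclidean norm. Take these centers as means and the `μ`-masses of the cells as weights:
the mixture is then `∫ N(c(x), σ²I) dμ(x)`, and the two integrals are compared pointwise.

The pointwise comparison is `gauss_sub_le`: if `|x - c| ≤ r` then `N(x, σ²I)` and `N(c, σ²I)`
differ by at most `2r/σ` on every measurable set. With `L` the likelihood ratio, the difference is
at most `∫ |L - 1| dN(c, σ²I)`, which is controlled through the chi-square divergence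
`∫ L² dN(c, σ²I) - 1 = exp(|x - c|²/σ²) - 1` (`integral_gaussRatioPi_sq`), computed coordinatewise
from the Gaussian moment generating function.
-/

open MeasureTheory ProbabilityTheory Real

/-- Euclidean norm on `Fin d → ℝ`. -/
noncomputable def norm2 {d : ℕ} (x : Fin d → ℝ) : ℝ := Real.sqrt (∑ i, (x i) ^ 2)

/-- Total variation distance between two measures. -/
noncomputable def dTV {α : Type*} [MeasurableSpace α] (μ ν : Measure α) : ℝ :=
  ⨆ A : {A : Set α // MeasurableSet A}, |(μ A).toReal - (ν A).toReal|

/-- Gaussian measure `N(m, σ²I_q)` on `Fin q → ℝ`. -/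
noncomputable def gauss (q : ℕ) (m : Fin q → ℝ) (σ : ℝ) : Measure (Fin q → ℝ) :=
  Measure.pi fun i => gaussianReal (m i) (σ ^ 2).toNNReal

/-! ### Likelihood ratios of Gaussians with a common variance -/

/-- Likelihood ratio of `N(x, v)` with respect to `N(c, v)`. -/
noncomputable def gaussRatio (x c v z : ℝ) : ℝ :=
  Real.exp ((c ^ 2 - x ^ 2) / (2 * v)) * Real.exp ((x - c) / v * z)

lemma gaussRatio_nonneg (x c v z : ℝ) : 0 ≤ gaussRatio x c v z := by
  unfold gaussRatio; positivity

@[fun_prop]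
lemma measurable_gaussRatio (x c v : ℝ) : Measurable (gaussRatio x c v) := by
  unfold gaussRatio; fun_prop

lemma integrable_gaussRatio (x c v : ℝ) (w : NNReal) :
    Integrable (gaussRatio x c v) (gaussianReal c w) :=
  (integrable_exp_mul_gaussianReal _).const_mul _

lemma gaussRatio_sq (x c v z : ℝ) : gaussRatio x c v z ^ 2 =
    Real.exp ((c ^ 2 - x ^ 2) / v) * Real.exp (2 * ((x - c) / v) * z) := by
  unfold gaussRatio
  rw [mul_pow, ← Real.exp_nat_mul, ← Real.exp_nat_mul]
  congr 2
  · push_cast; rw [div_mul_eq_div_div_swap]; ring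
  · push_cast; ring

lemma integrable_gaussRatio_sq (x c v : ℝ) (w : NNReal) :
    Integrable (fun z => gaussRatio x c v z ^ 2) (gaussianReal c w) := by
  simp_rw [gaussRatio_sq]
  exact (integrable_exp_mul_gaussianReal _).const_mul _

/-- Second moment of the likelihood ratio, i.e. one plus the chi-square divergence. -/
lemma integral_gaussRatio_sq (x c : ℝ) {v : NNReal} (hv : v ≠ 0) :
    ∫ z, gaussRatio x c v z ^ 2 ∂(gaussianReal c v) = Real.exp ((x - c) ^ 2 / v) := by
  simp_rw [gaussRatio_sq]
  rw [integral_const_mul]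
  have h := congrFun (mgf_fun_id_gaussianReal (μ := c) (v := v)) (2 * ((x - c) / v))
  simp only [mgf] at h
  rw [h, ← Real.exp_add]
  congr 1
  have : (v : ℝ) ≠ 0 := by exact_mod_cast hv
  field_simp
  ring

lemma gaussianReal_eq_withDensity_gaussRatio (x c : ℝ) {v : NNReal} (hv : v ≠ 0) :
    gaussianReal x v =
      (gaussianReal c v).withDensity (fun z => ENNReal.ofReal (gaussRatio x c v z)) := by
  rw [gaussianReal_of_var_ne_zero x hv, gaussianReal_of_var_ne_zero c hv,
    ← withDensity_mul _ (by fun_prop) (by fun_prop)]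
  congr 1
  funext z
  have : (v : ℝ) ≠ 0 := by exact_mod_cast hv
  simp only [Pi.mul_apply, gaussianPDF]
  rw [← ENNReal.ofReal_mul (gaussianPDFReal_nonneg _ _ _)]
  congr 1
  unfold gaussianPDFReal gaussRatio
  rw [← Real.exp_add, mul_assoc _ (Real.exp _) (Real.exp _), ← Real.exp_add]
  congr 2
  field_simp
  ring

/-- Likelihood ratio between the product Gaussians with means `x` and `c`. -/
noncomputable def gaussRatioPi {d : ℕ} (x c : Fin d → ℝ) (v : ℝ) (z : Fin d → ℝ) : ℝ :=
  ∏ i, gaussRatio (x i) (c i) v (z i)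

lemma gaussRatioPi_nonneg {d : ℕ} (x c : Fin d → ℝ) (v : ℝ) (z : Fin d → ℝ) :
    0 ≤ gaussRatioPi x c v z := Finset.prod_nonneg fun _ _ => gaussRatio_nonneg _ _ _ _

@[fun_prop]
lemma measurable_gaussRatioPi {d : ℕ} (x c : Fin d → ℝ) (v : ℝ) :
    Measurable (gaussRatioPi x c v) := by
  unfold gaussRatioPi
  fun_prop

instance (d : ℕ) (m : Fin d → ℝ) (σ : ℝ) : IsProbabilityMeasure (gauss d m σ) := by
  unfold gauss; infer_instance

lemma integrable_gaussRatioPi {d : ℕ} (x c : Fin d → ℝ) (v σ : ℝ) :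
    Integrable (gaussRatioPi x c v) (gauss d c σ) :=
  Integrable.fintype_prod_dep (f := fun i => gaussRatio (x i) (c i) v)
    fun _ => integrable_gaussRatio _ _ _ _

lemma integrable_gaussRatioPi_sq {d : ℕ} (x c : Fin d → ℝ) (v σ : ℝ) :
    Integrable (fun z => gaussRatioPi x c v z ^ 2) (gauss d c σ) := by
  simp_rw [gaussRatioPi, ← Finset.prod_pow]
  exact Integrable.fintype_prod_dep (f := fun i z => gaussRatio (x i) (c i) v z ^ 2)
    fun _ => integrable_gaussRatio_sq _ _ _ _

lemma toNNReal_sq_ne_zero {σ : ℝ} (hσ : 0 < σ) : (σ ^ 2).toNNReal ≠ 0 := by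
  have : 0 < σ ^ 2 := by positivity
  simpa using this.ne'

lemma integral_gaussRatioPi_sq {d : ℕ} (x c : Fin d → ℝ) {σ : ℝ} (hσ : 0 < σ) :
    ∫ z, gaussRatioPi x c (σ ^ 2) z ^ 2 ∂(gauss d c σ)
      = Real.exp ((∑ i, (x i - c i) ^ 2) / σ ^ 2) := by
  simp_rw [gaussRatioPi, ← Finset.prod_pow, gauss]
  rw [integral_fintype_prod_eq_prod (f := fun i z => gaussRatio (x i) (c i) (σ ^ 2) z ^ 2),
    Finset.sum_div, Real.exp_sum]
  refine Finset.prod_congr rfl fun i _ => ?_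
  have h := integral_gaussRatio_sq (x i) (c i) (toNNReal_sq_ne_zero hσ)
  rwa [Real.coe_toNNReal _ (sq_nonneg σ)] at h

/-- Uniqueness of product measures reduces this to boxes, where both sides factor over the
coordinates. -/
lemma gauss_eq_withDensity {d : ℕ} (x c : Fin d → ℝ) {σ : ℝ} (hσ : 0 < σ) :
    gauss d x σ = (gauss d c σ).withDensity
      (fun z => ENNReal.ofReal (gaussRatioPi x c (σ ^ 2) z)) := by
  refine Measure.pi_eq fun s hs => ?_
  rw [withDensity_apply _ (MeasurableSet.univ_pi hs),
    ← lintegral_indicator (MeasurableSet.univ_pi hs)]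
  -- On a box the indicator splits as a product, so the integral factorizes.
  have key : ∀ z, (Set.univ.pi s).indicator
      (fun z => ENNReal.ofReal (gaussRatioPi x c (σ ^ 2) z)) z
      = ENNReal.ofReal (∏ i, (s i).indicator (gaussRatio (x i) (c i) (σ ^ 2)) (z i)) := by
    intro z
    by_cases hz : z ∈ Set.univ.pi s
    · rw [Set.indicator_of_mem hz]
      congr 1
      exact Finset.prod_congr rfl fun i _ =>
        (Set.indicator_of_mem (hz i (Set.mem_univ i)) _).symm
    · rw [Set.indicator_of_notMem hz]
      simp only [Set.mem_univ_pi, not_forall] at hz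
      obtain ⟨i, hi⟩ := hz
      rw [Finset.prod_eq_zero (Finset.mem_univ i) (Set.indicator_of_notMem hi _),
        ENNReal.ofReal_zero]
  have hInt : ∀ i, Integrable ((s i).indicator (gaussRatio (x i) (c i) (σ ^ 2)))
      (gaussianReal (c i) (σ ^ 2).toNNReal) :=
    fun i => (integrable_gaussRatio _ _ _ _).indicator (hs i)
  have hnn : ∀ i z, 0 ≤ (s i).indicator (gaussRatio (x i) (c i) (σ ^ 2)) z :=
    fun i z => Set.indicator_nonneg (fun _ _ => gaussRatio_nonneg _ _ _ _) z
  simp_rw [key]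
  rw [gauss, ← ofReal_integral_eq_lintegral_ofReal (Integrable.fintype_prod_dep hInt)
    (Filter.Eventually.of_forall fun z => Finset.prod_nonneg fun i _ => hnn i _),
    integral_fintype_prod_eq_prod,
    ENNReal.ofReal_prod_of_nonneg fun i _ => integral_nonneg (hnn i)]
  refine Finset.prod_congr rfl fun i _ => ?_
  rw [ofReal_integral_eq_lintegral_ofReal (hInt i) (Filter.Eventually.of_forall (hnn i))]
  have h := gaussianReal_eq_withDensity_gaussRatio (x i) (c i) (toNNReal_sq_ne_zero hσ)
  rw [Real.coe_toNNReal _ (sq_nonneg σ)] at h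
  conv_rhs => rw [h]
  rw [withDensity_apply _ (hs i), ← lintegral_indicator (hs i)]
  refine lintegral_congr fun z => ?_
  by_cases hz : z ∈ s i <;> simp [hz]

/-! ### Total variation distance between translated Gaussians -/

/-- Quantitative continuity of the Gaussian in its mean. The bound is trivial once `r ≥ σ/2`;
below that, with `L` the likelihood
ratio, `|L - 1| ≤ (s + (L - 1)² / s) / 2` with `s = r / σ` reduces it to the chi-square
divergence `exp (|x - c|² / σ²) - 1 ≤ 2 s²`. -/
lemma gauss_sub_le {d : ℕ} (x c : Fin d → ℝ) {σ r : ℝ} (hσ : 0 < σ) (hr : 0 ≤ r)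
    (hxc : ∑ i, (x i - c i) ^ 2 ≤ r ^ 2) {A : Set (Fin d → ℝ)} (hA : MeasurableSet A) :
    |(gauss d x σ).real A - (gauss d c σ).real A| ≤ 2 * r / σ := by
  rcases hr.eq_or_lt with rfl | hr
  · have h0 : ∑ i, (x i - c i) ^ 2 = 0 :=
      le_antisymm (by simpa using hxc) (Finset.sum_nonneg fun _ _ => sq_nonneg _)
    rw [Finset.sum_eq_zero_iff_of_nonneg fun _ _ => sq_nonneg _] at h0
    have : x = c := funext fun i => by
      have := h0 i (Finset.mem_univ i)
      rw [sq_eq_zero_iff] at this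
      linarith
    simp [this]
  set s := r / σ with hs
  have hs0 : 0 < s := by positivity
  have hgoal : 2 * r / σ = 2 * s := by rw [hs]; ring
  rw [hgoal]
  by_cases hbig : 1 / 2 ≤ s
  · have h1 := measureReal_le_one (μ := gauss d x σ) (s := A)
    have h2 := measureReal_le_one (μ := gauss d c σ) (s := A)
    have h3 := measureReal_nonneg (μ := gauss d x σ) (s := A)
    have h4 := measureReal_nonneg (μ := gauss d c σ) (s := A)
    rw [abs_le]; constructor <;> linarith
  push Not at hbig
  set L := gaussRatioPi x c (σ ^ 2) with hL
  have hLi : Integrable L (gauss d c σ) := integrable_gaussRatioPi _ _ _ _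
  have hL2i : Integrable (fun z => L z ^ 2) (gauss d c σ) := integrable_gaussRatioPi_sq _ _ _ _
  have hreal : ∀ S, MeasurableSet S → (gauss d x σ).real S = ∫ z in S, L z ∂(gauss d c σ) := by
    intro S hS
    rw [measureReal_def, gauss_eq_withDensity x c hσ, withDensity_apply _ hS,
      ← ofReal_integral_eq_lintegral_ofReal hLi.integrableOn
        (Filter.Eventually.of_forall fun z => gaussRatioPi_nonneg _ _ _ _),
      ENNReal.toReal_ofReal (integral_nonneg fun z => gaussRatioPi_nonneg _ _ _ _)]
  have hL1 : ∫ z, L z ∂(gauss d c σ) = 1 := by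
    rw [← setIntegral_univ, ← hreal _ MeasurableSet.univ]; simp
  have hdiff : (gauss d x σ).real A - (gauss d c σ).real A
      = ∫ z in A, (L z - 1) ∂(gauss d c σ) := by
    rw [integral_sub hLi.integrableOn (integrable_const _), hreal A hA]
    simp
  have hL1i : Integrable (fun z => L z - 1) (gauss d c σ) := hLi.sub (integrable_const _)
  have hI1 : Integrable (fun z => L z ^ 2 - 2 * L z) (gauss d c σ) :=
    hL2i.sub (hLi.const_mul 2)
  have hI2 : Integrable (fun z => (L z ^ 2 - 2 * L z + 1) / s) (gauss d c σ) :=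
    (hI1.add (integrable_const 1)).div_const s
  have hbd : Integrable (fun z => (s + (L z ^ 2 - 2 * L z + 1) / s) / 2) (gauss d c σ) :=
    ((integrable_const s).add hI2).div_const 2
  calc |(gauss d x σ).real A - (gauss d c σ).real A|
      ≤ ∫ z in A, |L z - 1| ∂(gauss d c σ) := by
        rw [hdiff]; exact abs_integral_le_integral_abs
    _ ≤ ∫ z, |L z - 1| ∂(gauss d c σ) :=
        setIntegral_le_integral hL1i.abs (Filter.Eventually.of_forall fun _ => abs_nonneg _)
    _ ≤ ∫ z, (s + (L z ^ 2 - 2 * L z + 1) / s) / 2 ∂(gauss d c σ) := by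
        refine integral_mono hL1i.abs hbd fun z => ?_
        have h : 0 ≤ (s - |L z - 1|) ^ 2 := sq_nonneg _
        have h2 := sq_abs (L z - 1)
        simp only
        rw [le_div_iff₀ two_pos, ← sub_le_iff_le_add', le_div_iff₀ hs0]
        nlinarith
    _ = (s + (Real.exp ((∑ i, (x i - c i) ^ 2) / σ ^ 2) - 1) / s) / 2 := by
        have e1 : ∫ z, (L z ^ 2 - 2 * L z) ∂(gauss d c σ)
            = Real.exp ((∑ i, (x i - c i) ^ 2) / σ ^ 2) - 2 := by
          rw [integral_sub hL2i (hLi.const_mul 2), integral_const_mul, hL1, hL,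
            integral_gaussRatioPi_sq x c hσ, mul_one]
        have e2 : ∫ z, (L z ^ 2 - 2 * L z + 1) ∂(gauss d c σ)
            = Real.exp ((∑ i, (x i - c i) ^ 2) / σ ^ 2) - 1 := by
          rw [integral_add hI1 (integrable_const 1), e1]
          simp; ring
        rw [integral_div, integral_add (integrable_const _) hI2,
          integral_div (μ := gauss d c σ) s (fun z => L z ^ 2 - 2 * L z + 1), e2]
        simp
    _ ≤ 2 * s := by
        have hexp : Real.exp ((∑ i, (x i - c i) ^ 2) / σ ^ 2) ≤ Real.exp (s ^ 2) := by
          rw [Real.exp_le_exp, hs, div_pow]; gcongr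
        have hq : s ^ 2 ≤ 1 := by nlinarith
        have h1 := Real.abs_exp_sub_one_le (x := s ^ 2) (by rw [abs_of_nonneg (sq_nonneg s)]; exact hq)
        rw [abs_of_nonneg (sq_nonneg s)] at h1
        have h2 := le_abs_self (Real.exp (s ^ 2) - 1)
        have h3 : (Real.exp ((∑ i, (x i - c i) ^ 2) / σ ^ 2) - 1) / s ≤ 2 * s := by
          rw [div_le_iff₀ hs0]; nlinarith
        linarith

/-! ### Gaussian smoothing as an average of Gaussians -/

lemma gauss_eq_map {d : ℕ} (x : Fin d → ℝ) (σ : ℝ) :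
    gauss d x σ = (gauss d 0 σ).map (fun y => x + y) := by
  have h := Measure.pi_map_pi (μ := fun i : Fin d => gaussianReal 0 (σ ^ 2).toNNReal)
    (f := fun i (y : ℝ) => x i + y) (fun i => by fun_prop)
  have e : (fun y : Fin d → ℝ => x + y) = fun y i => x i + y i := rfl
  unfold gauss
  rw [e]
  simp only [Pi.zero_apply]
  rw [h]
  simp [gaussianReal_map_const_add]

lemma measurable_gauss_apply {d : ℕ} (σ : ℝ) {A : Set (Fin d → ℝ)} (hA : MeasurableSet A) :
    Measurable fun x => gauss d x σ A := by
  have h : ∀ x, gauss d x σ A = gauss d 0 σ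
      (Prod.mk x ⁻¹' ((fun p : (Fin d → ℝ) × (Fin d → ℝ) => p.1 + p.2) ⁻¹' A)) := by
    intro x
    rw [gauss_eq_map, Measure.map_apply (by fun_prop) hA]; rfl
  simp_rw [h]
  exact measurable_measure_prodMk_left (measurable_add hA)

lemma integrable_gauss_apply {d : ℕ} (σ : ℝ) (μ : Measure (Fin d → ℝ)) [IsProbabilityMeasure μ]
    {A : Set (Fin d → ℝ)} (hA : MeasurableSet A) :
    Integrable (fun x => (gauss d x σ).real A) μ :=
  Integrable.of_bound (measurable_gauss_apply σ hA).ennreal_toReal.aestronglyMeasurable 1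
    (Filter.Eventually.of_forall fun x => by
      rw [Real.norm_of_nonneg measureReal_nonneg]; exact measureReal_le_one)

/-- Smoothing by a Gaussian averages the Gaussians centered at the points of the space. -/
lemma conv_gauss_apply {d : ℕ} (σ : ℝ) (μ : Measure (Fin d → ℝ)) [IsProbabilityMeasure μ]
    {A : Set (Fin d → ℝ)} (hA : MeasurableSet A) :
    (μ.conv (gauss d 0 σ)).real A = ∫ x, (gauss d x σ).real A ∂μ := by
  rw [measureReal_def, Measure.conv, Measure.map_apply measurable_add hA,
    Measure.prod_apply (measurable_add hA)]
  simp_rw [measureReal_def]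
  rw [integral_toReal]
  · congr 1
    refine lintegral_congr fun x => ?_
    rw [gauss_eq_map x, Measure.map_apply (by fun_prop) hA]; rfl
  · exact (measurable_gauss_apply σ hA).aemeasurable
  · exact Filter.Eventually.of_forall fun x => measure_lt_top _ _

/-! ### The grid -/

/-- Index of the cell containing `t` when `[-B, B]` is cut into `n` equal intervals; indices
past the last cell are sent to it, which takes care of `t = B`. -/
noncomputable def cellIdx (B : ℝ) (n : ℕ) (hn : 0 < n) (t : ℝ) : Fin n :=
  ⟨min (n - 1) ⌊(t + B) * n / (2 * B)⌋₊, by omega⟩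

/-- Midpoint of the `j`-th cell. -/
noncomputable def cellMid (B : ℝ) (n : ℕ) (j : Fin n) : ℝ := -B + (2 * (j : ℝ) + 1) * B / n

lemma measurable_cellIdx (B : ℝ) (n : ℕ) (hn : 0 < n) : Measurable (cellIdx B n hn) := by
  have h : Measurable fun k : ℕ => (⟨min (n - 1) k, by omega⟩ : Fin n) := measurable_from_top
  exact h.comp (Nat.measurable_floor.comp (by fun_prop))

lemma cellMid_mem {B : ℝ} (hB : 0 < B) {n : ℕ} (hn : 0 < n) (j : Fin n) :
    cellMid B n j ∈ Set.Icc (-B) B := by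
  have hn' : (0 : ℝ) < n := by exact_mod_cast hn
  have hj : (j : ℝ) + 1 ≤ n := by exact_mod_cast j.2
  unfold cellMid
  have h : (2 * (j : ℝ) + 1) * B / n ≤ 2 * B := by
    rw [div_le_iff₀ hn']; nlinarith
  have h0 : 0 ≤ (2 * (j : ℝ) + 1) * B / n := by positivity
  constructor <;> linarith

lemma abs_sub_cellMid_le {B : ℝ} (hB : 0 < B) {n : ℕ} (hn : 0 < n) {t : ℝ}
    (ht : t ∈ Set.Icc (-B) B) : |t - cellMid B n (cellIdx B n hn t)| ≤ B / n := by
  have hn' : (0 : ℝ) < n := by exact_mod_cast hn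
  obtain ⟨h1, h2⟩ := ht
  set u := (t + B) * n / (2 * B) with hu
  have hu0 : 0 ≤ u := div_nonneg (mul_nonneg (by linarith) hn'.le) (by linarith)
  have hun : u ≤ n := by
    rw [hu, div_le_iff₀ (by linarith)]; nlinarith
  have htu : t = -B + 2 * u * B / n := by rw [hu]; field_simp; ring
  set j := min (n - 1) ⌊u⌋₊ with hj
  have hju : (j : ℝ) ≤ u :=
    le_trans (by exact_mod_cast min_le_right _ _) (Nat.floor_le hu0)
  have huj : u ≤ j + 1 := by
    rcases le_total (n - 1) ⌊u⌋₊ with h | h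
    · have : j + 1 = n := by rw [hj, min_eq_left h]; omega
      have : (j : ℝ) + 1 = n := by exact_mod_cast this
      linarith
    · rw [hj, min_eq_right h]; exact (Nat.lt_floor_add_one u).le
  have e : t - cellMid B n (cellIdx B n hn t) = (2 * u - 2 * j - 1) * (B / n) := by
    have : ((cellIdx B n hn t : Fin n) : ℕ) = j := rfl
    rw [cellMid, this]
    conv_lhs => rw [htu]
    ring
  rw [e, abs_mul, abs_of_pos (div_pos hB hn')]
  have : |2 * u - 2 * j - 1| ≤ 1 := by rw [abs_le]; constructor <;> linarith
  have h3 : 0 < B / n := div_pos hB hn'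
  nlinarith

/-- Estimating smoothed bounded-support distributions by Gaussian
mixtures: if `μ` is a probability measure supported on `[−B,B]^d` with a density and
`0 < η ≤ B`, then with `k = ⌈B/η⌉^d` there are means `c₁,…,c_k ∈ [−B,B]^d` and weights
`w₁,…,w_k ≥ 0` summing to `1` with
`d_TV(μ ∗ γ_{σ,d}, ∑ᵢ wᵢ·N(cᵢ,σ²I_d)) ≤ 2√d·η/σ`. -/
theorem smoothed_measure_gaussian_mixture (d : ℕ) (B σ η : ℝ)
    (hB : 0 < B) (hσ : 0 < σ) (hη0 : 0 < η) (hηB : η ≤ B)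
    (μ : Measure (Fin d → ℝ)) (hμprob : IsProbabilityMeasure μ)
    (hsupp : μ {x | ¬ ∀ i, x i ∈ Set.Icc (-B) B} = 0)
    (hac : μ ≪ volume) :
    ∃ (c : Fin (⌈B / η⌉₊ ^ d) → (Fin d → ℝ)) (w : Fin (⌈B / η⌉₊ ^ d) → ℝ),
      (∀ i j, c i j ∈ Set.Icc (-B) B) ∧ (∀ i, 0 ≤ w i) ∧ (∑ i, w i) = 1 ∧
      dTV (μ.conv (gauss d 0 σ)) (∑ i, ENNReal.ofReal (w i) • gauss d (c i) σ)
        ≤ 2 * Real.sqrt d * η / σ := by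
  set n := ⌈B / η⌉₊ with hn_def
  have hn : 0 < n := Nat.ceil_pos.2 (div_pos hB hη0)
  have hn' : (0 : ℝ) < n := by exact_mod_cast hn
  have hBn : B / n ≤ η := by
    rw [div_le_comm₀ hn' hη0]; exact Nat.le_ceil _
  -- `f` rounds a point to its grid cell; the mixture is the law of the rounded point, smoothed.
  let f : (Fin d → ℝ) → Fin (n ^ d) := fun x => finFunctionFinEquiv fun i => cellIdx B n hn (x i)
  have hf : Measurable f := (measurable_of_finite _).comp
    (measurable_pi_lambda _ fun i => (measurable_cellIdx B n hn).comp (measurable_pi_apply i))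
  let c : Fin (n ^ d) → Fin d → ℝ := fun j i => cellMid B n (finFunctionFinEquiv.symm j i)
  have hcf : ∀ x i, c (f x) i = cellMid B n (cellIdx B n hn (x i)) := fun x i => by
    simp only [c, f, Equiv.symm_apply_apply]
  let w : Fin (n ^ d) → ℝ := fun j => (μ.map f).real {j}
  have : IsProbabilityMeasure (μ.map f) := Measure.isProbabilityMeasure_map hf.aemeasurable
  refine ⟨c, w, fun i j => cellMid_mem hB hn _, fun i => measureReal_nonneg, ?_, ?_⟩
  · simp [w]
  have hbound : 2 * Real.sqrt d * η / σ = 2 * (Real.sqrt d * η) / σ := by ring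
  have : Nonempty {A : Set (Fin d → ℝ) // MeasurableSet A} := ⟨⟨∅, MeasurableSet.empty⟩⟩
  rw [hbound]
  refine ciSup_le fun ⟨A, hA⟩ => ?_
  have hmix : ((∑ i, ENNReal.ofReal (w i) • gauss d (c i) σ) A).toReal
      = ∫ x, (gauss d (c (f x)) σ).real A ∂μ := by
    rw [← integral_map (f := fun j => (gauss d (c j) σ).real A) hf.aemeasurable
      (measurable_of_finite _).aestronglyMeasurable, integral_fintype (Integrable.of_finite),
      Measure.finsetSum_apply, ENNReal.toReal_sum (fun i _ => by
        rw [Measure.smul_apply, smul_eq_mul]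
        exact ENNReal.mul_ne_top ENNReal.ofReal_ne_top (measure_ne_top _ _))]
    refine Finset.sum_congr rfl fun i _ => ?_
    rw [Measure.smul_apply, smul_eq_mul, ENNReal.toReal_mul,
      ENNReal.toReal_ofReal measureReal_nonneg]
    rfl
  have hconv := conv_gauss_apply σ μ hA
  rw [measureReal_def] at hconv
  have hInt : Integrable (fun x => (gauss d (c (f x)) σ).real A) μ :=
    Integrable.of_bound ((measurable_of_finite
      (fun j => (gauss d (c j) σ).real A)).comp hf).aestronglyMeasurable 1
      (Filter.Eventually.of_forall fun x => by
        rw [Real.norm_of_nonneg measureReal_nonneg]; exact measureReal_le_one)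
  simp only
  rw [hmix, hconv, ← integral_sub (integrable_gauss_apply σ μ hA) hInt]
  have hae : ∀ᵐ x ∂μ, ‖(gauss d x σ).real A - (gauss d (c (f x)) σ).real A‖
      ≤ 2 * (Real.sqrt d * η) / σ := by
    have hs : ∀ᵐ x ∂μ, ∀ i, x i ∈ Set.Icc (-B) B := hsupp
    filter_upwards [hs] with x hx
    refine gauss_sub_le x (c (f x)) hσ (by positivity) ?_ hA
    rw [mul_pow, Real.sq_sqrt (Nat.cast_nonneg d)]
    calc ∑ i, (x i - c (f x) i) ^ 2 ≤ ∑ _i : Fin d, η ^ 2 := by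
          refine Finset.sum_le_sum fun i _ => ?_
          rw [hcf, ← sq_abs]
          have := (abs_sub_cellMid_le hB hn (hx i)).trans hBn
          gcongr
      _ = d * η ^ 2 := by simp
  simpa using norm_integral_le_of_norm_le_const hae
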